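/- Let A be a finite-dimensional left Leibniz algebra over a field F and let B be a subinvariant subalgebra of A. Then B^ω = ⋂_{i≥1} B^i is an ideal of A. -/

import Mathlib

open Submodule

section LeibnizDefs

variable {F : Type*} {A : Type*} [Field F] [AddCommGroup A] [Module F A]

/-- The span of all products `b*c` with `b ∈ B`, `c ∈ C`. -/
def mulSub (mul : A →ₗ[F] A →ₗ[F] A) (B C : Submodule F A) : Submodule F A :=
  Submodule.span F {z : A | ∃ b ∈ B, ∃ c ∈ C, mul b c = z}

/-- `fSub mul B C = B·C + C·B`, the function `f(B,C)`. -/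
def fSub (mul : A →ₗ[F] A →ₗ[F] A) (B C : Submodule F A) : Submodule F A :=
  mulSub mul B C ⊔ mulSub mul C B

/-- `fIter mul B C n = f^{n+1}(B,C)` (so index `0` is `f^1(B,C) = f(B,C)`). -/
def fIter (mul : A →ₗ[F] A →ₗ[F] A) (B C : Submodule F A) : ℕ → Submodule F A
  | 0 => fSub mul B C
  | n + 1 => fSub mul B (fIter mul B C n)

/-- `lcs mul B n = B^{n+1}`, the lower central series (index `0` is `B^1 = B`). -/
def lcs (mul : A →ₗ[F] A →ₗ[F] A) (B : Submodule F A) : ℕ → Submodule F A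
  | 0 => B
  | n + 1 => mulSub mul B (lcs mul B n)

/-- `ds mul B n = B^{(n+1)}`, the derived series (index `0` is `B^{(1)} = B`). -/
def ds (mul : A →ₗ[F] A →ₗ[F] A) (B : Submodule F A) : ℕ → Submodule F A
  | 0 => B
  | n + 1 => mulSub mul (ds mul B n) (ds mul B n)

/-- `B^ω = ⋂_{i ≥ 1} B^i`. -/
def omegaSub (mul : A →ₗ[F] A →ₗ[F] A) (B : Submodule F A) : Submodule F A :=
  ⨅ n, lcs mul B n

/-- `B` is a subalgebra: a subspace closed under multiplication. -/
def IsSubalg (mul : A →ₗ[F] A →ₗ[F] A) (B : Submodule F A) : Prop :=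
  ∀ x ∈ B, ∀ y ∈ B, mul x y ∈ B

/-- `I` is an ideal of the subalgebra `S`: `I ⊆ S` and `xI + Ix ⊆ I` for all `x ∈ S`. -/
def IsIdealIn (mul : A →ₗ[F] A →ₗ[F] A) (I S : Submodule F A) : Prop :=
  I ≤ S ∧ ∀ x ∈ S, ∀ y ∈ I, mul x y ∈ I ∧ mul y x ∈ I

/-- `B` is subinvariant in `S`: there is a chain of subalgebras
`B = c 0 ⊆ c 1 ⊆ ⋯ ⊆ c t = S` with each term an ideal of the next. -/
def IsSubinvariantIn (mul : A →ₗ[F] A →ₗ[F] A) (B S : Submodule F A) : Prop :=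
  ∃ (t : ℕ) (c : ℕ → Submodule F A), c 0 = B ∧ c t = S ∧
    (∀ i ≤ t, IsSubalg mul (c i)) ∧ ∀ i < t, IsIdealIn mul (c i) (c (i + 1))

/-- `B` is nilpotent: `B^m = 0` for some `m`. -/
def IsNilpotentSub (mul : A →ₗ[F] A →ₗ[F] A) (B : Submodule F A) : Prop :=
  ∃ m, lcs mul B m = ⊥

/-- `B` is solvable: `B^{(m)} = 0` for some `m`. -/
def IsSolvableSub (mul : A →ₗ[F] A →ₗ[F] A) (B : Submodule F A) : Prop :=
  ∃ m, ds mul B m = ⊥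

/-- The centralizer `Z_A(B) = {x : xb = 0 = bx for all b ∈ B}`. -/
def centralizerSet (mul : A →ₗ[F] A →ₗ[F] A) (B : Submodule F A) : Set A :=
  {x : A | ∀ b ∈ B, mul x b = 0 ∧ mul b x = 0}

/-- `R` is the radical (the maximal solvable ideal) of the subalgebra `S`. -/
def IsRadicalIn (mul : A →ₗ[F] A →ₗ[F] A) (S R : Submodule F A) : Prop :=
  IsIdealIn mul R S ∧ IsSolvableSub mul R ∧
    ∀ T, IsIdealIn mul T S → IsSolvableSub mul T → T ≤ R

/-- `N` is the nilradical (the maximal nilpotent ideal) of the subalgebra `S`. -/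
def IsNilradicalIn (mul : A →ₗ[F] A →ₗ[F] A) (S N : Submodule F A) : Prop :=
  IsIdealIn mul N S ∧ IsNilpotentSub mul N ∧
    ∀ T, IsIdealIn mul T S → IsNilpotentSub mul T → T ≤ N

/-- `H` is a Cartan subalgebra: a nilpotent self-normalizing subalgebra. -/
def IsCartan (mul : A →ₗ[F] A →ₗ[F] A) (H : Submodule F A) : Prop :=
  IsSubalg mul H ∧ IsNilpotentSub mul H ∧
    ∀ x : A, (∀ h ∈ H, mul x h ∈ H ∧ mul h x ∈ H) → x ∈ H

/-- The subalgebra generated by a set: the smallest subalgebra containing it. -/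
def subalgGen (mul : A →ₗ[F] A →ₗ[F] A) (s : Set A) : Submodule F A :=
  sInf {S : Submodule F A | IsSubalg mul S ∧ s ⊆ (S : Set A)}

end LeibnizDefs

/-!
Write `f(B, C) = B·C + C·B`. The Leibniz identity gives `f(B·C, D) ⊆ f(B, f(C, D)) + f(C, f(B, D))`,
so `f(B^n, C) ⊆ f^n(B, C)` by induction: multiplying by `B^n` is no more than multiplying `n` times
by `B`. If `B` is subinvariant in `S` along a chain of length `t`, each application of `f(B, ·)`
moves one step down the chain, so `f^t(B, S) ⊆ B`, and from there on each application moves one step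
down the lower central series. Hence `f(B^ω, S) ⊆ f^n(B, S)` for every `n`, which lies in every
`B^i` once `n` is large.
-/

section Products

variable {F A : Type*} [Field F] [AddCommGroup A] [Module F A] {mul : A →ₗ[F] A →ₗ[F] A}
  {B B' C C' D S : Submodule F A}

theorem mulSub_eq_map₂ : mulSub mul B C = map₂ mul B C :=
  (map₂_eq_span_image2 mul B C).symm

theorem mulSub_le : mulSub mul B C ≤ D ↔ ∀ b ∈ B, ∀ c ∈ C, mul b c ∈ D := by
  rw [mulSub_eq_map₂, map₂_le]

theorem mul_mem_mulSub {b c : A} (hb : b ∈ B) (hc : c ∈ C) : mul b c ∈ mulSub mul B C :=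
  mulSub_le.1 le_rfl b hb c hc

theorem mulSub_mono (hB : B ≤ B') (hC : C ≤ C') : mulSub mul B C ≤ mulSub mul B' C' :=
  mulSub_le.2 fun _ hb _ hc => mul_mem_mulSub (hB hb) (hC hc)

theorem fSub_mono (hB : B ≤ B') (hC : C ≤ C') : fSub mul B C ≤ fSub mul B' C' :=
  sup_le_sup (mulSub_mono hB hC) (mulSub_mono hC hB)

theorem monotone_fSub_right : Monotone (fSub mul B) :=
  fun _ _ hC => fSub_mono le_rfl hC

theorem isSubalg_iff_fSub_le : IsSubalg mul B ↔ fSub mul B B ≤ B := by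
  rw [fSub, sup_idem, mulSub_le, IsSubalg]

theorem isIdealIn_iff_fSub_le : IsIdealIn mul B S ↔ B ≤ S ∧ fSub mul B S ≤ B := by
  rw [IsIdealIn, fSub, sup_le_iff, mulSub_le, mulSub_le]
  exact and_congr_right fun _ =>
    ⟨fun h => ⟨fun b hb s hs => (h s hs b hb).2, fun s hs b hb => (h s hs b hb).1⟩,
      fun h s hs b hb => ⟨h.2 s hs b hb, h.1 b hb s hs⟩⟩

end Products

section Leibniz

variable {F A : Type*} [Field F] [AddCommGroup A] [Module F A] {mul : A →ₗ[F] A →ₗ[F] A}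
  (hleib : ∀ x y z : A, mul x (mul y z) = mul (mul x y) z + mul y (mul x z))
  (B C D : Submodule F A)

include hleib

theorem mulSub_mulSub_left_le :
    mulSub mul (mulSub mul B C) D ≤
      mulSub mul B (mulSub mul C D) ⊔ mulSub mul C (mulSub mul B D) := by
  refine mulSub_le.2 fun x hx d hd => ?_
  suffices h : mulSub mul B C ≤
      (mulSub mul B (mulSub mul C D) ⊔ mulSub mul C (mulSub mul B D)).comap (mul.flip d) from h hx
  refine mulSub_le.2 fun b hb c hc => ?_
  rw [mem_comap, LinearMap.flip_apply, eq_sub_of_add_eq (hleib b c d).symm]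
  exact sub_mem (mem_sup_left (mul_mem_mulSub hb (mul_mem_mulSub hc hd)))
    (mem_sup_right (mul_mem_mulSub hc (mul_mem_mulSub hb hd)))

theorem mulSub_mulSub_right_le :
    mulSub mul B (mulSub mul C D) ≤
      mulSub mul (mulSub mul B C) D ⊔ mulSub mul C (mulSub mul B D) := by
  refine mulSub_le.2 fun b hb x hx => ?_
  suffices h : mulSub mul C D ≤
      (mulSub mul (mulSub mul B C) D ⊔ mulSub mul C (mulSub mul B D)).comap (mul b) from h hx
  refine mulSub_le.2 fun c hc d hd => ?_
  rw [mem_comap, hleib]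
  exact add_mem (mem_sup_left (mul_mem_mulSub (mul_mem_mulSub hb hc) hd))
    (mem_sup_right (mul_mem_mulSub hc (mul_mem_mulSub hb hd)))

theorem fSub_mulSub_le :
    fSub mul (mulSub mul B C) D ≤ fSub mul B (fSub mul C D) ⊔ fSub mul C (fSub mul B D) := by
  refine sup_le ((mulSub_mulSub_left_le hleib B C D).trans ?_)
    ((mulSub_mulSub_right_le hleib D B C).trans ?_)
  · exact sup_le_sup (le_sup_of_le_left (mulSub_mono le_rfl le_sup_left))
      (le_sup_of_le_left (mulSub_mono le_rfl le_sup_left))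
  · rw [sup_comm]
    exact sup_le_sup (le_sup_of_le_left (mulSub_mono le_rfl le_sup_right))
      (le_sup_of_le_right (mulSub_mono le_sup_right le_rfl))

theorem fSub_lcs_le_iterate (n : ℕ) : fSub mul (lcs mul B n) C ≤ (fSub mul B)^[n + 1] C := by
  induction n generalizing C with
  | zero => exact le_rfl
  | succ n ih =>
    refine (fSub_mulSub_le hleib B (lcs mul B n) C).trans (sup_le ?_ (ih (fSub mul B C)))
    rw [Function.iterate_succ_apply']
    exact monotone_fSub_right (ih C)

theorem mulSub_lcs_lcs_le (m n : ℕ) :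
    mulSub mul (lcs mul B m) (lcs mul B n) ≤ lcs mul B (m + n + 1) := by
  induction m generalizing n with
  | zero => rw [Nat.zero_add]; exact le_rfl
  | succ m ih =>
    rw [Nat.succ_add_eq_add_succ]
    exact (mulSub_mulSub_left_le hleib B (lcs mul B m) (lcs mul B n)).trans
      (sup_le (mulSub_mono le_rfl (ih n)) (ih (n + 1)))

theorem fSub_lcs_le_lcs_succ (n : ℕ) : fSub mul B (lcs mul B n) ≤ lcs mul B (n + 1) :=
  sup_le le_rfl (mulSub_lcs_lcs_le hleib B n 0)

theorem iterate_fSub_self_le_lcs (n : ℕ) : (fSub mul B)^[n] B ≤ lcs mul B n := by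
  induction n with
  | zero => exact le_rfl
  | succ n ih =>
    rw [Function.iterate_succ_apply']
    exact (monotone_fSub_right ih).trans (fSub_lcs_le_lcs_succ hleib B n)

end Leibniz

section Subinvariant

variable {F A : Type*} [Field F] [AddCommGroup A] [Module F A] {mul : A →ₗ[F] A →ₗ[F] A}
  {B S : Submodule F A} {c : ℕ → Submodule F A} {t : ℕ}

theorem chain_zero_le (hc : ∀ i < t, IsIdealIn mul (c i) (c (i + 1))) : c 0 ≤ c t := by
  induction t with
  | zero => exact le_rfl
  | succ t ih => exact (ih fun i hi => hc i (hi.trans t.lt_succ_self)).trans (hc t t.lt_succ_self).1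

theorem iterate_fSub_chain_le (hc : ∀ i < t, IsIdealIn mul (c i) (c (i + 1))) :
    (fSub mul (c 0))^[t] (c t) ≤ c 0 := by
  induction t with
  | zero => exact le_rfl
  | succ t ih =>
    have hc' : ∀ i < t, IsIdealIn mul (c i) (c (i + 1)) :=
      fun i hi => hc i (hi.trans t.lt_succ_self)
    have step_down : fSub mul (c 0) (c (t + 1)) ≤ c t :=
      (fSub_mono (chain_zero_le hc') le_rfl).trans
        (isIdealIn_iff_fSub_le.1 (hc t t.lt_succ_self)).2
    exact (monotone_fSub_right.iterate t step_down).trans (ih hc')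

theorem IsSubinvariantIn.isSubalg (hB : IsSubinvariantIn mul B S) : IsSubalg mul B := by
  obtain ⟨t, c, rfl, -, hsub, -⟩ := hB
  exact hsub 0 t.zero_le

theorem IsSubinvariantIn.le (hB : IsSubinvariantIn mul B S) : B ≤ S := by
  obtain ⟨t, c, rfl, rfl, -, hc⟩ := hB
  exact chain_zero_le hc

theorem IsSubinvariantIn.exists_iterate_fSub_le (hB : IsSubinvariantIn mul B S) :
    ∃ t, (fSub mul B)^[t] S ≤ B := by
  obtain ⟨t, c, rfl, rfl, -, hc⟩ := hB
  exact ⟨t, iterate_fSub_chain_le hc⟩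

end Subinvariant

theorem stmt_2_general {F A : Type*} [Field F] [AddCommGroup A] [Module F A]
    (mul : A →ₗ[F] A →ₗ[F] A)
    (hleib : ∀ x y z : A, mul x (mul y z) = mul (mul x y) z + mul y (mul x z))
    (B S : Submodule F A) (hB : IsSubinvariantIn mul B S) :
    IsIdealIn mul (omegaSub mul B) S := by
  have omega_le_lcs (n : ℕ) : omegaSub mul B ≤ lcs mul B n := iInf_le _ n
  obtain ⟨t, ht⟩ := hB.exists_iterate_fSub_le
  refine isIdealIn_iff_fSub_le.2 ⟨(omega_le_lcs 0).trans hB.le, le_iInf fun n => ?_⟩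
  calc fSub mul (omegaSub mul B) S
      ≤ fSub mul (lcs mul B (n + t)) S := fSub_mono (omega_le_lcs (n + t)) le_rfl
    _ ≤ (fSub mul B)^[n + t + 1] S := fSub_lcs_le_iterate hleib B S (n + t)
    _ = (fSub mul B)^[n + 1] ((fSub mul B)^[t] S) := by
      rw [← Function.iterate_add_apply, Nat.add_right_comm]
    _ ≤ (fSub mul B)^[n + 1] B := monotone_fSub_right.iterate (n + 1) ht
    _ ≤ (fSub mul B)^[n] B := monotone_fSub_right.iterate n (isSubalg_iff_fSub_le.1 hB.isSubalg)
    _ ≤ lcs mul B n := iterate_fSub_self_le_lcs hleib B n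

/-- if `B` is subinvariant in `A`, then `B^ω` is an ideal of `A`. -/
theorem stmt_2 {F A : Type*} [Field F] [AddCommGroup A] [Module F A] [FiniteDimensional F A]
    (mul : A →ₗ[F] A →ₗ[F] A)
    (hleib : ∀ x y z : A, mul x (mul y z) = mul (mul x y) z + mul y (mul x z))
    (B : Submodule F A) (hB : IsSubinvariantIn mul B ⊤) :
    IsIdealIn mul (omegaSub mul B) ⊤ :=
  stmt_2_general mul hleib B ⊤ hB
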